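/- Let (E, λ) be a training set and T a reasonable decision tree for (E, λ). If T' is obtained from T by a single subtree replacement operation, then T' is again a reasonable decision tree for (E, λ) and the number of errors of T' on (E, λ) is at least the number of errors of T on (E, λ). Consequently, if T' is obtained from a reasonable tree T by any sequence of subtree replacement operations, the number of errors of T' is at least that of T. -/

import Mathlib

/-- The two class labels. -/
inductive Label where
  | blue
  | red
deriving DecidableEq

/-- A decision tree over examples `ι → ℝ` with classes `{blue, red}`:
every inner node carries a feature and a threshold, every leaf a class label.
An example goes to the left child if its value in the node's feature is at most
the threshold, and to the right child otherwise. -/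
inductive DTree (ι : Type) where
  | leaf (c : Label)
  | node (feat : ι) (thr : ℝ) (left right : DTree ι)

namespace DTree

variable {ι : Type}

/-- The class that a decision tree assigns to an example. -/
noncomputable def classify : DTree ι → (ι → ℝ) → Label
  | .leaf c, _ => c
  | .node f t l r, e => if e f ≤ t then l.classify e else r.classify e

/-- The routing path of an example (`false` = left child, `true` = right child);
it is the position of the leaf of the example. -/
noncomputable def route : DTree ι → (ι → ℝ) → List Bool
  | .leaf _, _ => []
  | .node f t l r, e => if e f ≤ t then false :: l.route e else true :: r.route e

/-- The subtree rooted at a position (`none` if the position is not a node). -/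
def subtreeAt : DTree ι → List Bool → Option (DTree ι)
  | T, [] => some T
  | .leaf _, _ :: _ => none
  | .node _ _ l r, b :: p => (if b then r else l).subtreeAt p

/-- Replace the subtree at a given position by another tree. -/
def replaceAt : DTree ι → List Bool → DTree ι → DTree ι
  | _, [], T' => T'
  | .leaf c, _ :: _, _ => .leaf c
  | .node f t l r, b :: p, T' =>
      if b then .node f t l (r.replaceAt p T') else .node f t (l.replaceAt p T') r

/-- The number of inner nodes of a decision tree. -/
def innerCount : DTree ι → ℕ
  | .leaf _ => 0
  | .node _ _ l r => 1 + l.innerCount + r.innerCount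

/-- The position `p` is an inner node of `T`. -/
def IsInnerPos (T : DTree ι) (p : List Bool) : Prop :=
  ∃ f t l r, T.subtreeAt p = some (.node f t l r)

/-- The position `p` is a node of `T`. -/
def IsNodePos (T : DTree ι) (p : List Bool) : Prop :=
  (T.subtreeAt p).isSome

/-- The feature and threshold of the inner node at position `p`. -/
def cutAt (T : DTree ι) (p : List Bool) : Option (ι × ℝ) :=
  match T.subtreeAt p with
  | some (.node f t _ _) => some (f, t)
  | _ => none

/-- The subtree raising operation at position `q` keeping the child in direction `b`:
the subtree rooted at `q` is replaced by the subtree rooted at its `b`-child; it prunes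
the node at `q` together with all inner nodes of the subtree rooted at the other child. -/
def raiseAt (T : DTree ι) (q : List Bool) (b : Bool) : DTree ι :=
  match T.subtreeAt q with
  | some (.node _ _ l r) => T.replaceAt q (if b then r else l)
  | _ => T

end DTree

/-- `E[T,p]`: the examples of `E` whose routing through `T` passes the position `p`. -/
noncomputable def reach {ι : Type} (E : Finset (ι → ℝ)) (T : DTree ι) (p : List Bool) :
    Finset (ι → ℝ) :=
  E.filter fun e => p <+: T.route e

/-- The number of errors of `T` on the training set `(E, lab)`. -/
noncomputable def errCount {ι : Type} (T : DTree ι) (E : Finset (ι → ℝ))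
    (lab : (ι → ℝ) → Label) : ℕ :=
  (E.filter fun e => T.classify e ≠ lab e).card

/-- A most frequent label of the labeled set `(E, lab)` (blue in case of a tie). -/
def majorityLabel {ι : Type} (E : Finset (ι → ℝ)) (lab : (ι → ℝ) → Label) : Label :=
  if (E.filter fun e => lab e = Label.red).card ≤ (E.filter fun e => lab e = Label.blue).card
  then Label.blue else Label.red

/-- One subtree replacement operation: some inner node of `T` is replaced by a leaf
labeled with a most frequent label of the examples reaching it. -/
def ReplStep {ι : Type} (E : Finset (ι → ℝ)) (lab : (ι → ℝ) → Label)
    (T T' : DTree ι) : Prop :=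
  ∃ p, T.IsInnerPos p ∧
    T' = T.replaceAt p (.leaf (majorityLabel (reach E T p) lab))

/-- `T` is a reasonable decision tree for `(E, lab)`: every node is reached by some
example and every leaf carries a most frequent label of the examples reaching it. -/
def Reasonable {ι : Type} (E : Finset (ι → ℝ)) (lab : (ι → ℝ) → Label)
    (T : DTree ι) : Prop :=
  (∀ p, T.IsNodePos p → (reach E T p).Nonempty) ∧
  (∀ p c, T.subtreeAt p = some (.leaf c) → ∀ c' : Label,
    ((reach E T p).filter fun e => lab e = c').card ≤
      ((reach E T p).filter fun e => lab e = c).card)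

/-- Apply a sequence of raising operations (given by positions and kept directions). -/
def applySeq {ι : Type} : DTree ι → List (List Bool × Bool) → DTree ι
  | T, [] => T
  | T, (q, b) :: rest => applySeq (T.raiseAt q b) rest

/-- Each raising operation of the sequence is applied at an inner node. -/
def ValidSeq {ι : Type} : DTree ι → List (List Bool × Bool) → Prop
  | _, [] => True
  | T, (q, b) :: rest => T.IsInnerPos q ∧ ValidSeq (T.raiseAt q b) rest

/-- The total number of inner nodes pruned by a sequence of raising operations. -/
def seqPruned {ι : Type} : DTree ι → List (List Bool × Bool) → ℕ
  | _, [] => 0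
  | T, (q, b) :: rest =>
      (match T.subtreeAt q with
        | some (.node _ _ l r) => 1 + DTree.innerCount (if b then l else r)
        | _ => 0) + seqPruned (T.raiseAt q b) rest

/-- `T'` is obtained from `T` by a (possibly empty) sequence of subtree raising
operations. -/
def RaisedFrom {ι : Type} (T T' : DTree ι) : Prop :=
  ∃ steps, ValidSeq T steps ∧ applySeq T steps = T'

/-- `T'` is obtained from `T` by a sequence of subtree raising operations pruning
exactly `m` inner nodes in total. -/
def RaisedFromPruning {ι : Type} (T : DTree ι) (m : ℕ) (T' : DTree ι) : Prop :=
  ∃ steps, ValidSeq T steps ∧ seqPruned T steps = m ∧ applySeq T steps = T'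

/-- Tracking the position of a node through one raising operation: nodes strictly
below the raised node on the discarded side, and the raised node itself, are pruned
(`none`); all other nodes survive at a possibly shifted position. -/
def stepMap (q : List Bool) (b : Bool) (p : List Bool) : Option (List Bool) :=
  if q <+: p then
    if q ++ [b] <+: p then some (q ++ p.drop (q.length + 1)) else none
  else some p

/-- Tracking the position of a node through a sequence of raising operations. -/
def seqMap : List (List Bool × Bool) → List Bool → Option (List Bool)
  | [], p => some p
  | (q, b) :: rest, p => (stepMap q b p).bind (seqMap rest)

/-- The number of errors of `T` on a multiset of labeled examples. -/
noncomputable def errCountM {ι : Type} (T : DTree ι) (E : Multiset ((ι → ℝ) × Label)) : ℕ :=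
  (E.filter fun q => T.classify q.1 ≠ q.2).card

section Replacement

variable {ι : Type}

open DTree

theorem reach_nil (E : Finset (ι → ℝ)) (T : DTree ι) : reach E T [] = E := by
  simp [reach]

theorem reach_node_false (E : Finset (ι → ℝ)) (f : ι) (t : ℝ) (l r : DTree ι) (p : List Bool) :
    reach E (.node f t l r) (false :: p) = reach (E.filter fun e => e f ≤ t) l p := by
  ext e
  simp only [reach, Finset.mem_filter]
  by_cases h : e f ≤ t <;> simp [route, h]

theorem reach_node_true (E : Finset (ι → ℝ)) (f : ι) (t : ℝ) (l r : DTree ι) (p : List Bool) :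
    reach E (.node f t l r) (true :: p) = reach (E.filter fun e => ¬ e f ≤ t) r p := by
  ext e
  simp only [reach, Finset.mem_filter]
  by_cases h : e f ≤ t <;> simp [route, h, -not_le]

theorem errCount_node (E : Finset (ι → ℝ)) (lab : (ι → ℝ) → Label)
    (f : ι) (t : ℝ) (l r : DTree ι) :
    errCount (.node f t l r) E lab =
      errCount l (E.filter fun e => e f ≤ t) lab +
        errCount r (E.filter fun e => ¬ e f ≤ t) lab := by
  unfold errCount
  rw [← Finset.card_filter_add_card_filter_not (fun e : ι → ℝ => e f ≤ t)]
  congr 2 <;> ext e <;> simp only [Finset.mem_filter] <;> by_cases h : e f ≤ t <;>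
    simp [classify, h, -not_le]

theorem errCount_leaf_add_card (E : Finset (ι → ℝ)) (lab : (ι → ℝ) → Label) (c : Label) :
    errCount (.leaf c) E lab + (E.filter fun e => lab e = c).card = E.card := by
  simp only [errCount, classify, ne_eq, eq_comm (a := c)]
  rw [add_comm, Finset.card_filter_add_card_filter_not]

theorem card_filter_le_majorityLabel (E : Finset (ι → ℝ)) (lab : (ι → ℝ) → Label) (c : Label) :
    (E.filter fun e => lab e = c).card ≤
      (E.filter fun e => lab e = majorityLabel E lab).card := by
  unfold majorityLabel
  split_ifs with h <;> cases c <;> first | exact le_rfl | omega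

theorem reasonable_leaf_iff (E : Finset (ι → ℝ)) (lab : (ι → ℝ) → Label) (c : Label) :
    Reasonable E lab (.leaf c) ↔ E.Nonempty ∧ ∀ c' : Label,
      (E.filter fun e => lab e = c').card ≤ (E.filter fun e => lab e = c).card := by
  constructor
  · rintro ⟨hne, hmaj⟩
    have h₁ := hne [] rfl
    have h₂ := hmaj [] c rfl
    rw [reach_nil] at h₁ h₂
    exact ⟨h₁, h₂⟩
  · rintro ⟨hne, hmaj⟩
    refine ⟨fun p hp => ?_, fun p c₁ hp => ?_⟩
    · cases p with
      | nil => rwa [reach_nil]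
      | cons b p => simp [IsNodePos, subtreeAt] at hp
    · cases p with
      | nil =>
        simp only [subtreeAt, Option.some.injEq, leaf.injEq] at hp
        subst hp
        rwa [reach_nil]
      | cons b p => simp [subtreeAt] at hp

theorem reasonable_node_iff (E : Finset (ι → ℝ)) (lab : (ι → ℝ) → Label)
    (f : ι) (t : ℝ) (l r : DTree ι) :
    Reasonable E lab (.node f t l r) ↔
      Reasonable (E.filter fun e => e f ≤ t) lab l ∧
        Reasonable (E.filter fun e => ¬ e f ≤ t) lab r := by
  constructor
  · rintro ⟨hne, hmaj⟩
    refine ⟨⟨fun p hp => ?_, fun p c hp => ?_⟩, ⟨fun p hp => ?_, fun p c hp => ?_⟩⟩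
    · rw [← reach_node_false E f t l r]
      exact hne (false :: p) hp
    · rw [← reach_node_false E f t l r]
      exact hmaj (false :: p) c hp
    · rw [← reach_node_true E f t l r]
      exact hne (true :: p) hp
    · rw [← reach_node_true E f t l r]
      exact hmaj (true :: p) c hp
  · rintro ⟨⟨hnel, hmajl⟩, ⟨hner, hmajr⟩⟩
    refine ⟨fun p hp => ?_, fun p c hp => ?_⟩
    · rcases p with _ | ⟨_ | _, p⟩
      · have h := hnel [] rfl
        rw [reach_nil] at h ⊢
        exact h.mono (Finset.filter_subset _ _)
      · rw [reach_node_false]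
        exact hnel p hp
      · rw [reach_node_true]
        exact hner p hp
    · rcases p with _ | ⟨_ | _, p⟩
      · simp [subtreeAt] at hp
      · rw [reach_node_false]
        exact hmajl p c hp
      · rw [reach_node_true]
        exact hmajr p c hp

theorem Reasonable.nonempty {E : Finset (ι → ℝ)} {lab : (ι → ℝ) → Label} {T : DTree ι}
    (h : Reasonable E lab T) : E.Nonempty := by
  simpa only [reach_nil] using h.1 [] rfl

/-- A reasonable tree makes no more errors than any constant classifier. -/
theorem Reasonable.errCount_le_leaf {lab : (ι → ℝ) → Label} {T : DTree ι} (c : Label)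
    {E : Finset (ι → ℝ)} (h : Reasonable E lab T) :
    errCount T E lab ≤ errCount (.leaf c) E lab := by
  induction T generalizing E with
  | leaf c₁ =>
    have hc := ((reasonable_leaf_iff E lab c₁).1 h).2 c
    have h₁ := errCount_leaf_add_card E lab c₁
    have h₂ := errCount_leaf_add_card E lab c
    omega
  | node f t l r ihl ihr =>
    obtain ⟨hl, hr⟩ := (reasonable_node_iff E lab f t l r).1 h
    have hsplit := errCount_node E lab f t (.leaf c) (.leaf c)
    have hconst : errCount (.node f t (.leaf c) (.leaf c)) E lab = errCount (.leaf c) E lab := by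
      unfold errCount
      congr 1
      ext e
      simp only [Finset.mem_filter]
      simp [classify]
    rw [errCount_node, ← hconst, hsplit]
    exact add_le_add (ihl hl) (ihr hr)

theorem Reasonable.replaceAt_majority {lab : (ι → ℝ) → Label} (p : List Bool)
    {E : Finset (ι → ℝ)} {T : DTree ι} (h : Reasonable E lab T) (hp : T.IsInnerPos p) :
    Reasonable E lab (T.replaceAt p (.leaf (majorityLabel (reach E T p) lab))) ∧
      errCount T E lab ≤
        errCount (T.replaceAt p (.leaf (majorityLabel (reach E T p) lab))) E lab := by
  induction p generalizing E T with
  | nil =>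
    have hT : ∀ S : DTree ι, T.replaceAt [] S = S := fun S => by cases T <;> rfl
    rw [hT, reach_nil]
    exact ⟨(reasonable_leaf_iff _ _ _).2 ⟨h.nonempty, card_filter_le_majorityLabel E lab⟩,
      h.errCount_le_leaf _⟩
  | cons b p ih =>
    cases T with
    | leaf c =>
      obtain ⟨_, _, _, _, hsub⟩ := hp
      simp [subtreeAt] at hsub
    | node f t l r =>
      obtain ⟨hl, hr⟩ := (reasonable_node_iff E lab f t l r).1 h
      cases b with
      | false =>
        obtain ⟨h₁, h₂⟩ := ih hl hp
        simp only [reach_node_false, replaceAt, Bool.false_eq_true, if_false,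
          reasonable_node_iff, errCount_node]
        exact ⟨⟨h₁, hr⟩, Nat.add_le_add_right h₂ _⟩
      | true =>
        obtain ⟨h₁, h₂⟩ := ih hr hp
        simp only [reach_node_true, replaceAt, if_true, reasonable_node_iff, errCount_node]
        exact ⟨⟨hl, h₁⟩, Nat.add_le_add_left h₂ _⟩

theorem Reasonable.replStep {E : Finset (ι → ℝ)} {lab : (ι → ℝ) → Label} {T T' : DTree ι}
    (h : Reasonable E lab T) (hs : ReplStep E lab T T') :
    Reasonable E lab T' ∧ errCount T E lab ≤ errCount T' E lab := by
  obtain ⟨p, hp, rfl⟩ := hs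
  exact h.replaceAt_majority p hp

theorem Reasonable.reflTransGen_replStep {E : Finset (ι → ℝ)} {lab : (ι → ℝ) → Label}
    {T T' : DTree ι} (h : Reasonable E lab T)
    (hs : Relation.ReflTransGen (ReplStep E lab) T T') :
    Reasonable E lab T' ∧ errCount T E lab ≤ errCount T' E lab := by
  induction hs with
  | refl => exact ⟨h, le_rfl⟩
  | tail _ hstep ih =>
    obtain ⟨h₁, h₂⟩ := ih.1.replStep hstep
    exact ⟨h₁, ih.2.trans h₂⟩

end Replacement

/-- If `T` is a reasonable decision tree for the training set
`(E, lab)` and `T'` is obtained from `T` by a single subtree replacement operation,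
then `T'` is again reasonable and has at least as many errors as `T`; consequently,
any tree obtained from a reasonable tree by a sequence of subtree replacement
operations has at least as many errors as the original tree. -/
theorem stmt0 {d : ℕ} (E : Finset (Fin d → ℝ)) (lab : (Fin d → ℝ) → Label)
    (T T' : DTree (Fin d)) :
    (Reasonable E lab T → ReplStep E lab T T' →
      Reasonable E lab T' ∧ errCount T E lab ≤ errCount T' E lab)
    ∧ (Reasonable E lab T → Relation.ReflTransGen (ReplStep E lab) T T' →
      errCount T E lab ≤ errCount T' E lab) := by
  exact ⟨fun h hs => h.replStep hs, fun h hs => (h.reflTransGen_replStep hs).2⟩
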